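/- arXiv:2311.11292 — 2 statements merged into one kernel-verified Lean document; each statement's English description precedes it below -/
import Mathlib

section
/- Let d ≥ 1 and k ≥ 1 be integers and, for each j ∈ {1,…,d}, let σ_j be a permutation of {1,…,k} with R^{(j)}_i := σ_j(i). Define ν̂ := (1/k) · Σ_{i=1}^{k} [ max_{j=1,…,d} R^{(j)}_i/(k+1) − (1/d) · Σ_{j=1}^{d} R^{(j)}_i/(k+1) ]. Then the madogram-based estimator of the extremal coefficient θ̂^{MAD} := (0.5 + ν̂)/(0.5 − ν̂) satisfies θ̂^{MAD} ≤ k (equivalently, θ̂^{MAD} ≤ n/m when the sample of size n is divided into k = n/m blocks of length m). -/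
/-!
Each rank vector is a permutation of `{1,…,k}`, so the normalised ranks `R / (k + 1)` have mean
exactly `1/2` in every coordinate (`sum_normalized_rank`); hence the subtracted term contributes
exactly `1/2` to the estimator. The maximum of the normalised ranks never exceeds `k / (k + 1)`,
so `ν ≤ k / (k + 1) - 1/2`. Thus `1/2 + ν ≤ k / (k + 1)` while `1/2 - ν ≥ 1 / (k + 1) > 0`, and
the quotient is at most `k`.
-/

theorem sum_normalized_rank (k : ℕ) (τ : Equiv.Perm (Fin k)) :
    ∑ i : Fin k, (((τ i : ℕ) : ℝ) + 1) / ((k : ℝ) + 1) = (k : ℝ) / 2 := by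
  have gauss : ∀ n : ℕ, ∑ i ∈ Finset.range n, ((i : ℝ) + 1) = (n : ℝ) * (n + 1) / 2 := by
    intro n
    induction n with
    | zero => simp
    | succ n ih => rw [Finset.sum_range_succ, ih]; push_cast; ring
  rw [Equiv.sum_comp τ (fun i : Fin k => (((i : ℕ) : ℝ) + 1) / ((k : ℝ) + 1)),
    Fin.sum_univ_eq_sum_range (fun i : ℕ => ((i : ℝ) + 1) / ((k : ℝ) + 1)),
    ← Finset.sum_div, gauss]
  have : (k : ℝ) + 1 ≠ 0 := by positivity
  field_simp


/-- With rank permutations `σ_j` of `{1,…,k}` in each coordinate and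
`ν̂` the nonparametric madogram estimator, the madogram-based estimator
`θ̂ = (0.5 + ν̂)/(0.5 - ν̂)` of the extremal coefficient is at most `k`. -/
theorem madogram_estimator_upper_bound (d k : ℕ) (hd : 0 < d) (hk : 0 < k)
    (σ : Fin d → Equiv.Perm (Fin k))
    (ν : ℝ)
    (hν : ν = (1 / (k : ℝ)) *
      ∑ i : Fin k,
        ((Finset.univ.sup' ⟨⟨0, hd⟩, Finset.mem_univ _⟩
            (fun j : Fin d => (((σ j i : ℕ) : ℝ) + 1) / ((k : ℝ) + 1)))
          - (1 / (d : ℝ)) *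
            ∑ j : Fin d, (((σ j i : ℕ) : ℝ) + 1) / ((k : ℝ) + 1))) :
    (0.5 + ν) / (0.5 - ν) ≤ (k : ℝ) := by
  have hk0 : (0 : ℝ) < k := by exact_mod_cast hk
  have hd0 : (0 : ℝ) < d := by exact_mod_cast hd
  have hk1 : (0 : ℝ) < (k : ℝ) + 1 := by positivity
  have hmean : ∑ i : Fin k, (1 / (d : ℝ)) *
      ∑ j : Fin d, (((σ j i : ℕ) : ℝ) + 1) / ((k : ℝ) + 1) = (k : ℝ) / 2 := by
    rw [← Finset.mul_sum, Finset.sum_comm]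
    simp only [sum_normalized_rank, Finset.sum_const, Finset.card_univ, Fintype.card_fin,
      nsmul_eq_mul]
    field_simp
  have hmax : ∑ i : Fin k, (Finset.univ.sup' ⟨⟨0, hd⟩, Finset.mem_univ _⟩
      (fun j : Fin d => (((σ j i : ℕ) : ℝ) + 1) / ((k : ℝ) + 1)))
      ≤ (k : ℝ) * ((k : ℝ) / ((k : ℝ) + 1)) := by
    refine (Finset.sum_le_card_nsmul _ _ ((k : ℝ) / ((k : ℝ) + 1)) ?_).trans ?_
    · intro i _
      refine Finset.sup'_le _ _ fun j _ => ?_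
      gcongr
      exact_mod_cast (σ j i).isLt
    · simp
  have hνle : ν ≤ (k : ℝ) / ((k : ℝ) + 1) - 1 / 2 := by
    rw [hν, Finset.sum_sub_distrib, hmean, one_div, inv_mul_le_iff₀ hk0]
    linarith
  have hsplit : (k : ℝ) / ((k : ℝ) + 1) = 1 - 1 / ((k : ℝ) + 1) := by
    field_simp
    ring
  have hinv : 0 < 1 / ((k : ℝ) + 1) := by positivity
  -- The denominator is positive, so the division is genuine and the bound can be cross-multiplied.
  have hden : 0 < 0.5 - ν := by norm_num; linarith
  rw [div_le_iff₀ hden]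
  have hmul : ν * ((k : ℝ) + 1) ≤ (k : ℝ) - ((k : ℝ) + 1) / 2 := by
    have h := mul_le_mul_of_nonneg_right hνle hk1.le
    rwa [sub_mul, div_mul_cancel₀ _ hk1.ne', one_div_mul_eq_div] at h
  norm_num
  linarith
end

section
/- For all α₀, α_a, α_b ∈ (0, 1], the SECO of the nested Gumbel (logistic) model, SECO = 2^{α_a} + 2^{α_b} − (2^{α_a/α₀} + 2^{α_b/α₀})^{α₀}, satisfies 0 ≤ SECO ≤ min(2^{α_a}, 2^{α_b}). -/
open Real

/-- SECO bounds for the nested Gumbel (logistic) model: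
`0 ≤ 2^αa + 2^αb − (2^(αa/α₀) + 2^(αb/α₀))^α₀ ≤ min (2^αa) (2^αb)`. -/
theorem nested_gumbel_seco_bounds (α₀ αa αb : ℝ)
    (h₀0 : 0 < α₀) (h₀1 : α₀ ≤ 1)
    (ha0 : 0 < αa) (ha1 : αa ≤ 1)
    (hb0 : 0 < αb) (hb1 : αb ≤ 1) :
    0 ≤ (2 : ℝ) ^ αa + (2 : ℝ) ^ αb -
        ((2 : ℝ) ^ (αa / α₀) + (2 : ℝ) ^ (αb / α₀)) ^ α₀ ∧
      (2 : ℝ) ^ αa + (2 : ℝ) ^ αb -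
        ((2 : ℝ) ^ (αa / α₀) + (2 : ℝ) ^ (αb / α₀)) ^ α₀ ≤
        min ((2 : ℝ) ^ αa) ((2 : ℝ) ^ αb) := by
  -- Taking `α₀`-th powers undoes the division by `α₀` in the exponent.
  have key (x : ℝ) : ((2 : ℝ) ^ (x / α₀)) ^ α₀ = 2 ^ x := by
    rw [← Real.rpow_mul (by norm_num), div_mul_cancel₀ x h₀0.ne']
  have pa : 0 < (2 : ℝ) ^ (αa / α₀) := by positivity
  have pb : 0 < (2 : ℝ) ^ (αb / α₀) := by positivity
  -- Lower bound: `t ↦ t ^ α₀` is subadditive on `[0, ∞)` because `0 ≤ α₀ ≤ 1`.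
  have hsub := Real.rpow_add_le_add_rpow pa.le pb.le h₀0.le h₀1
  -- Upper bound: `t ↦ t ^ α₀` is monotone, so the joint coefficient dominates each marginal one.
  have hA := Real.rpow_le_rpow pa.le (le_add_of_nonneg_right pb.le) h₀0.le
  have hB := Real.rpow_le_rpow pb.le (le_add_of_nonneg_left pa.le) h₀0.le
  rw [key] at hA hB
  rw [key, key] at hsub
  exact ⟨by linarith, le_min (by linarith) (by linarith)⟩
end
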